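/- arXiv:math/0609258 — 2 statements merged into one kernel-verified Lean document; each statement's English description precedes it below -/
import Mathlib

section
/- Let n be even and k = n/2. Then the highest component L_k of the decomposition of the space F_k of square-free k-linear forms in n variables consists exactly of those forms depending only on the differences of the variables: L_k = {f ∈ F_k : f(x₁+c, …, x_n+c) = f(x₁,…,x_n) for all c ∈ ℂ}. -/
/-!
Translation invariance is tested directly on values. If `f = ∑ a_T x^T` is square-free of degree `k`
in fewer than `2k` variables and `f(x + c) = f(x)`, then `c^k a_T = f(c 1_T) = f(-c 1_{Tᶜ}) = 0`,
because a square-free form of degree `k` vanishes at a point with fewer than `k` nonzero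
coordinates; so `f = 0` once `c` is not a zero divisor. In at least `2k` variables, split off a
variable: `f = x_a ∂_a f + h`. The coefficient `∂_a f` is again invariant, hence by induction a
combination of products of `k - 1` differences; each of these omits some further variable `x_j`, and
replacing `x_a` by `x_a - x_j` changes `f` only by a form not involving `x_a`, to which induction
applies.
-/

open scoped Classical

noncomputable section

open MvPolynomial

/-- The space of square-free `k`-linear forms in `n` variables: the span of the products
of `k` distinct variables. -/
noncomputable def Fspace (n k : ℕ) : Submodule ℂ (MvPolynomial (Fin n) ℂ) :=
  Submodule.span ℂ {p | ∃ s : Finset (Fin n), s.card = k ∧ p = ∏ i ∈ s, X i}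

/-- The elementary symmetric polynomial of degree `p` in the variables indexed by `s`. -/
noncomputable def esymmOn (n : ℕ) (s : Finset (Fin n)) (p : ℕ) : MvPolynomial (Fin n) ℂ :=
  ∑ t ∈ Finset.powersetCard p s, ∏ i ∈ t, X i

/-- The generator `X_I = (x_{i₁}-x_{i₂})⋯(x_{i_{2l-1}}-x_{i_{2l}}) · σ_{k-l}({x_j : j ∉ I})`
attached to a tuple `I` of `2l` distinct indices. -/
noncomputable def XIform (n k l : ℕ) (I : Fin (2 * l) ↪ Fin n) : MvPolynomial (Fin n) ℂ :=
  (∏ t : Fin l,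
      (X (I ⟨2 * t.1, by have := t.isLt; omega⟩) - X (I ⟨2 * t.1 + 1, by have := t.isLt; omega⟩))) *
    esymmOn n (Finset.univ.filter fun j => j ∉ Set.range I) (k - l)

/-- The subspace `L_l ⊆ F_k`: the span of the forms `X_I` over all tuples `I` of `2l`
distinct indices. -/
noncomputable def Lsub (n k l : ℕ) : Submodule ℂ (MvPolynomial (Fin n) ℂ) :=
  Submodule.span ℂ (Set.range (XIform n k l))

section CommSemiring

variable {σ R : Type*} [CommSemiring R]

variable (R) in
/-- The square-free forms of degree `k` in the variables indexed by `S`, as a span of monomials;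
`Fspace` is the case of all of `n` variables over `ℂ`. -/
def squarefreeForms (S : Finset σ) (k : ℕ) : Submodule R (MvPolynomial σ R) :=
  Submodule.span R ((fun s : Finset σ ↦ ∏ i ∈ s, X i) '' (S.powersetCard k))

lemma prod_X_mem_squarefreeForms {S s : Finset σ} (hs : s ⊆ S) :
    ∏ i ∈ s, X i ∈ squarefreeForms R S s.card :=
  Submodule.subset_span ⟨s, Finset.mem_coe.2 (Finset.mem_powersetCard.2 ⟨hs, rfl⟩), rfl⟩

lemma squarefreeForms_le_iff {S : Finset σ} {k : ℕ} {M : Submodule R (MvPolynomial σ R)} :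
    squarefreeForms R S k ≤ M ↔ ∀ s ⊆ S, s.card = k → ∏ i ∈ s, X i ∈ M := by
  rw [squarefreeForms, Submodule.span_le, Set.image_subset_iff]
  simp only [Set.subset_def, SetLike.mem_coe, Finset.mem_powersetCard, Set.mem_preimage, and_imp]

lemma squarefreeForms_mono {S T : Finset σ} (h : S ⊆ T) (k : ℕ) :
    squarefreeForms R S k ≤ squarefreeForms R T k :=
  Submodule.span_mono (Set.image_mono (Finset.powersetCard_mono h))

lemma X_mem_squarefreeForms {S : Finset σ} {a : σ} (ha : a ∈ S) :
    X a ∈ squarefreeForms R S 1 := by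
  simpa using prod_X_mem_squarefreeForms (R := R) (Finset.singleton_subset_iff.2 ha)

lemma mul_mem_squarefreeForms [DecidableEq σ] {S T : Finset σ} (hST : Disjoint S T) {k l : ℕ}
    {f g : MvPolynomial σ R} (hf : f ∈ squarefreeForms R S k) (hg : g ∈ squarefreeForms R T l) :
    f * g ∈ squarefreeForms R (S ∪ T) (k + l) := by
  have hle : squarefreeForms R S k * squarefreeForms R T l ≤ squarefreeForms R (S ∪ T) (k + l) := by
    rw [squarefreeForms, squarefreeForms, Submodule.span_mul_span, Submodule.span_le]
    rintro _ ⟨_, ⟨s, hs, rfl⟩, _, ⟨t, ht, rfl⟩, rfl⟩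
    obtain ⟨hsS, rfl⟩ := Finset.mem_powersetCard.1 (Finset.mem_coe.1 hs)
    obtain ⟨htT, rfl⟩ := Finset.mem_powersetCard.1 (Finset.mem_coe.1 ht)
    have hst : Disjoint s t := hST.mono hsS htT
    simpa only [Finset.prod_union hst, Finset.card_union_of_disjoint hst, SetLike.mem_coe] using
      prod_X_mem_squarefreeForms (R := R) (Finset.union_subset_union hsS htT)
  exact hle (Submodule.mul_mem_mul hf hg)

lemma prod_mem_squarefreeForms [DecidableEq σ] {ι : Type*} (u : Finset ι) (S : ι → Finset σ)
    (hS : (u : Set ι).PairwiseDisjoint S) (f : ι → MvPolynomial σ R)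
    (hf : ∀ t ∈ u, f t ∈ squarefreeForms R (S t) 1) :
    ∏ t ∈ u, f t ∈ squarefreeForms R (u.biUnion S) u.card := by
  induction u using Finset.induction_on with
  | empty => simpa using prod_X_mem_squarefreeForms (R := R) (Finset.empty_subset (∅ : Finset σ))
  | insert t u ht ih =>
    rw [Finset.coe_insert, Set.pairwiseDisjoint_insert_of_notMem (by simpa using ht)] at hS
    rw [Finset.prod_insert ht, Finset.biUnion_insert, Finset.card_insert_of_notMem ht, add_comm]
    exact mul_mem_squarefreeForms ((Finset.disjoint_biUnion_right _ _ _).2 hS.2)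
      (hf t (Finset.mem_insert_self t u))
      (ih hS.1 fun s hs ↦ hf s (Finset.mem_insert_of_mem hs))

lemma pderiv_prod_X_of_notMem {a : σ} {s : Finset σ} (ha : a ∉ s) :
    pderiv a (∏ i ∈ s, X i : MvPolynomial σ R) = 0 := by
  induction s using Finset.induction_on with
  | empty => rw [Finset.prod_empty, pderiv_one]
  | insert i s hi ih =>
    rw [Finset.mem_insert, not_or] at ha
    rw [Finset.prod_insert hi, Derivation.leibniz, ih ha.2, pderiv_X_of_ne (Ne.symm ha.1),
      smul_zero, smul_zero, add_zero]

lemma pderiv_prod_X [DecidableEq σ] (a : σ) (s : Finset σ) :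
    pderiv a (∏ i ∈ s, X i : MvPolynomial σ R) =
      if a ∈ s then ∏ i ∈ s.erase a, X i else 0 := by
  split_ifs with ha
  · rw [← Finset.mul_prod_erase s _ ha, Derivation.leibniz, pderiv_X_self,
      pderiv_prod_X_of_notMem (Finset.notMem_erase a s), smul_zero, zero_add, smul_eq_mul, mul_one]
  · exact pderiv_prod_X_of_notMem ha

lemma pderiv_mem_squarefreeForms [DecidableEq σ] {S : Finset σ} {k : ℕ} {f : MvPolynomial σ R}
    (a : σ) (hf : f ∈ squarefreeForms R S (k + 1)) :
    pderiv a f ∈ squarefreeForms R (S.erase a) k := by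
  suffices h : squarefreeForms R S (k + 1) ≤
      (squarefreeForms R (S.erase a) k).comap (pderiv a).toLinearMap from h hf
  refine squarefreeForms_le_iff.2 fun s hs hk ↦ ?_
  rw [Submodule.mem_comap, Derivation.coeFn_coe, pderiv_prod_X]
  split_ifs with ha
  · have hcard : (s.erase a).card = k := by rw [Finset.card_erase_of_mem ha, hk, Nat.add_sub_cancel]
    exact hcard ▸ prod_X_mem_squarefreeForms (Finset.erase_subset_erase a hs)
  · exact zero_mem _

lemma eval_eq_zero_of_card_lt {S N : Finset σ} {k : ℕ} {f : MvPolynomial σ R}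
    (hf : f ∈ squarefreeForms R S k) {x : σ → R} (hx : ∀ i ∈ S, i ∉ N → x i = 0)
    (hN : N.card < k) : eval x f = 0 := by
  suffices h : squarefreeForms R S k ≤ LinearMap.ker (aeval x).toLinearMap from h hf
  refine squarefreeForms_le_iff.2 fun s hs hk ↦ ?_
  obtain ⟨i, his, hiN⟩ := Finset.exists_mem_notMem_of_card_lt_card (hN.trans_eq hk.symm)
  simpa using Finset.prod_eq_zero his (hx i (hs his) hiN)

lemma eval_ite_sum_smul_prod_X [DecidableEq σ] {S T : Finset σ} {k : ℕ}
    (hT : T ∈ S.powersetCard k) (b : Finset σ → R) (c : R) :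
    eval (fun i ↦ if i ∈ T then c else 0) (∑ s ∈ S.powersetCard k, b s • ∏ i ∈ s, X i) =
      b T * c ^ k := by
  have hTk : T.card = k := (Finset.mem_powersetCard.1 hT).2
  rw [map_sum, Finset.sum_eq_single_of_mem T hT]
  · rw [smul_eval, eval_prod, ← hTk, ← Finset.prod_const]
    exact congrArg _ (Finset.prod_congr rfl fun i hi ↦ by rw [eval_X, if_pos hi])
  · intro s hs hsT
    have hsT' : ¬ s ⊆ T := fun h ↦ hsT (Finset.eq_of_subset_of_card_le h
      (by rw [hTk, (Finset.mem_powersetCard.1 hs).2]))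
    obtain ⟨i, his, hiT⟩ := Finset.not_subset.1 hsT'
    rw [smul_eval, eval_prod, Finset.prod_eq_zero his (by rw [eval_X, if_neg hiT]), mul_zero]

/-- The substitution `x_i ↦ x_i + c` in all variables. -/
def shift (c : R) : MvPolynomial σ R →ₐ[R] MvPolynomial σ R :=
  aeval fun i ↦ X i + C c

@[simp]
lemma shift_X (c : R) (i : σ) : shift c (X i) = X i + C c :=
  aeval_X _ i

lemma eval_shift (c : R) (x : σ → R) (f : MvPolynomial σ R) :
    eval x (shift c f) = eval (fun i ↦ x i + c) f := by
  rw [shift, aeval_eq_bind₁, ← coe_aeval_eq_eval, RingHom.coe_coe, aeval_bind₁]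
  simp

lemma pderiv_shift (c : R) (a : σ) (f : MvPolynomial σ R) :
    pderiv a (shift c f) = shift c (pderiv a f) := by
  induction f using MvPolynomial.induction_on with
  | C r => simp [shift]
  | add p q hp hq => simp only [map_add, hp, hq]
  | mul_X p i hp =>
    simp only [map_mul, map_add, Derivation.leibniz, smul_eq_mul, shift_X, pderiv_X, pderiv_C, hp,
      add_zero]
    rcases eq_or_ne i a with rfl | h <;> simp [*]

end CommSemiring

section CommRing

variable {σ R : Type*} [CommRing R]

lemma sub_X_mul_pderiv_mem_squarefreeForms [DecidableEq σ] {S : Finset σ} {k : ℕ}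
    {f : MvPolynomial σ R} (a : σ) (hf : f ∈ squarefreeForms R S k) :
    f - X a * pderiv a f ∈ squarefreeForms R (S.erase a) k := by
  suffices h : squarefreeForms R S k ≤ (squarefreeForms R (S.erase a) k).comap
      (LinearMap.id - LinearMap.mulLeft R (X a) ∘ₗ (pderiv a).toLinearMap) from h hf
  refine squarefreeForms_le_iff.2 fun s hs hk ↦ ?_
  rw [Submodule.mem_comap, LinearMap.sub_apply, LinearMap.comp_apply, LinearMap.mulLeft_apply,
    LinearMap.id_apply, Derivation.coeFn_coe, pderiv_prod_X]
  split_ifs with ha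
  · rw [Finset.mul_prod_erase s _ ha, sub_self]
    exact zero_mem _
  · rw [mul_zero, sub_zero, ← hk]
    exact prod_X_mem_squarefreeForms (Finset.subset_erase.2 ⟨hs, ha⟩)

theorem eq_zero_of_shift_eq_of_card_lt {S : Finset σ} {k : ℕ} (hS : S.card < 2 * k) {c : R}
    (hc : c ∈ nonZeroDivisors R) {f : MvPolynomial σ R} (hf : f ∈ squarefreeForms R S k)
    (hfc : shift c f = f) : f = 0 := by
  obtain ⟨b, hb⟩ := Submodule.mem_span_image_finset_iff_exists_fun' R |>.1 hf
  rw [← hb]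
  refine Finset.sum_eq_zero fun T hT ↦ ?_
  obtain ⟨hTS, hTk⟩ := Finset.mem_powersetCard.1 hT
  have hvanish : eval (fun i ↦ (if i ∈ T then c else 0) - c) f = 0 := by
    refine eval_eq_zero_of_card_lt (N := S \ T) hf (fun i hi hiN ↦ ?_) ?_
    · have hiT : i ∈ T := by simpa [hi] using hiN
      simp [hiT]
    · rw [Finset.card_sdiff_of_subset hTS]
      omega
  have hbT : b T * c ^ k = 0 := calc
    b T * c ^ k = eval (fun i ↦ if i ∈ T then c else 0) f := by
      rw [← hb, eval_ite_sum_smul_prod_X hT]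
    _ = eval (fun i ↦ (if i ∈ T then c else 0) - c) (shift c f) := by
      simp only [eval_shift, sub_add_cancel]
    _ = 0 := by rw [hfc, hvanish]
  rw [(mul_right_mem_nonZeroDivisors_eq_zero_iff (pow_mem hc k)).1 hbT, zero_smul]

variable (R) in
/-- The product `(x_{i₁} - x_{i₂}) ⋯ (x_{i_{2k-1}} - x_{i_{2k}})` attached to a tuple `I` of `2k`
distinct indices, which are numbered from `0` here. -/
def differenceProduct {k : ℕ} (I : Fin (2 * k) ↪ σ) : MvPolynomial σ R :=
  ∏ t : Fin k, (X (I ⟨2 * t, by lia⟩) - X (I ⟨2 * t + 1, by lia⟩))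

variable (R) in
/-- The span of the products of `k` differences of pairwise distinct variables indexed by `S`;
`Lsub n k k` is the case of all of `n` variables over `ℂ`. -/
def differenceForms (S : Finset σ) (k : ℕ) : Submodule R (MvPolynomial σ R) :=
  Submodule.span R (differenceProduct R '' {I : Fin (2 * k) ↪ σ | ∀ i, I i ∈ S})

lemma differenceProduct_mem_differenceForms {S : Finset σ} {k : ℕ} {I : Fin (2 * k) ↪ σ}
    (hI : ∀ i, I i ∈ S) : differenceProduct R I ∈ differenceForms R S k :=
  Submodule.subset_span ⟨I, hI, rfl⟩

lemma differenceForms_mono {S T : Finset σ} (h : S ⊆ T) (k : ℕ) :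
    differenceForms R S k ≤ differenceForms R T k :=
  Submodule.span_mono (Set.image_mono fun _ hI i ↦ h (hI i))

lemma differenceForms_zero (S : Finset σ) :
    differenceForms R S 0 = squarefreeForms R S 0 := by
  have hI : {I : Fin (2 * 0) ↪ σ | ∀ i, I i ∈ S}.Nonempty :=
    ⟨⟨fun i ↦ i.elim0, fun i ↦ i.elim0⟩, fun i ↦ i.elim0⟩
  have hprod : (differenceProduct R : (Fin (2 * 0) ↪ σ) → _) = fun _ ↦ 1 := by
    ext1 I
    simp [differenceProduct]
  simp [differenceForms, squarefreeForms, hprod, hI.image_const]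

lemma differenceProduct_snoc_snoc {k : ℕ} (I : Fin (2 * k) ↪ σ) {a b : σ} (ha : a ∉ Set.range I)
    (hb : b ∉ Set.range (Fin.Embedding.snoc I ha)) :
    differenceProduct R (k := k + 1) (Fin.Embedding.snoc (Fin.Embedding.snoc I ha) hb) =
      differenceProduct R I * (X a - X b) := by
  rw [differenceProduct, Fin.prod_univ_castSucc]
  congr 1
  · refine Finset.prod_congr rfl fun t _ ↦ ?_
    simp [Fin.snoc, show (2 * t : ℕ) < 2 * k + 1 by lia, show (2 * t + 1 : ℕ) < 2 * k by lia]
  · simp [Fin.snoc]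

lemma shift_differenceProduct (c : R) {k : ℕ} (I : Fin (2 * k) ↪ σ) :
    shift c (differenceProduct R I) = differenceProduct R I := by
  simp only [differenceProduct, map_prod, map_sub, shift_X, add_sub_add_right_eq_sub]

lemma shift_eq_of_mem_differenceForms (c : R) {S : Finset σ} {k : ℕ} {f : MvPolynomial σ R}
    (hf : f ∈ differenceForms R S k) : shift c f = f := by
  suffices h : Set.EqOn (shift c).toLinearMap LinearMap.id
      (differenceProduct R '' {I : Fin (2 * k) ↪ σ | ∀ i, I i ∈ S}) from LinearMap.eqOn_span h hf
  rintro _ ⟨I, -, rfl⟩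
  exact shift_differenceProduct c I

lemma differenceProduct_mem_squarefreeForms {S : Finset σ} {k : ℕ} {I : Fin (2 * k) ↪ σ}
    (hI : ∀ i, I i ∈ S) : differenceProduct R I ∈ squarefreeForms R S k := by
  let pair (t : Fin k) : Finset σ := {I ⟨2 * t, by lia⟩, I ⟨2 * t + 1, by lia⟩}
  have hpair : ((Finset.univ : Finset (Fin k)) : Set (Fin k)).PairwiseDisjoint pair := by
    intro s _ t _ hst
    simp only [Function.onFun, pair, Finset.disjoint_left, Finset.mem_insert,
      Finset.mem_singleton]
    rintro _ (rfl | rfl) <;> simp only [EmbeddingLike.apply_eq_iff_eq, Fin.mk.injEq] <;>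
      lia
  have hprod := prod_mem_squarefreeForms (R := R) Finset.univ pair hpair
    (fun t ↦ X (I ⟨2 * t, by lia⟩) - X (I ⟨2 * t + 1, by lia⟩)) fun t _ ↦
      sub_mem (X_mem_squarefreeForms (by simp [pair])) (X_mem_squarefreeForms (by simp [pair]))
  rw [Finset.card_univ, Fintype.card_fin] at hprod
  refine squarefreeForms_mono (Finset.biUnion_subset.2 fun t _ ↦ ?_) k hprod
  simp [pair, Finset.insert_subset_iff, hI]

lemma differenceForms_le_squarefreeForms (S : Finset σ) (k : ℕ) :
    differenceForms R S k ≤ squarefreeForms R S k := by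
  rw [differenceForms, Submodule.span_le]
  rintro _ ⟨I, hI, rfl⟩
  exact differenceProduct_mem_squarefreeForms hI

lemma X_mul_differenceProduct_mem_squarefreeForms {S : Finset σ} {k : ℕ} {I : Fin (2 * k) ↪ σ}
    (hI : ∀ i, I i ∈ S) {j : σ} (hjS : j ∈ S) (hjI : j ∉ Set.range I) :
    X j * differenceProduct R I ∈ squarefreeForms R S (k + 1) := by
  have hdisj : Disjoint {j} (Finset.univ.map I) := by simpa using hjI
  have hsub : {j} ∪ Finset.univ.map I ⊆ S := by
    simpa [Finset.union_subset_iff, hjS, Finset.subset_iff] using hI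
  rw [add_comm k]
  exact squarefreeForms_mono hsub _ (mul_mem_squarefreeForms hdisj
    (X_mem_squarefreeForms (Finset.mem_singleton_self j))
    (differenceProduct_mem_squarefreeForms (by simp)))

lemma X_mul_mem_differenceForms_sup_squarefreeForms [DecidableEq σ] {S : Finset σ} {a : σ}
    (ha : a ∉ S) {k : ℕ} (hS : 2 * k < S.card) {g : MvPolynomial σ R}
    (hg : g ∈ differenceForms R S k) :
    X a * g ∈ differenceForms R (insert a S) (k + 1) ⊔ squarefreeForms R S (k + 1) := by
  suffices h : differenceForms R S k ≤ (differenceForms R (insert a S) (k + 1) ⊔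
      squarefreeForms R S (k + 1)).comap (LinearMap.mulLeft R (X a)) from h hg
  rw [differenceForms, Submodule.span_le]
  rintro _ ⟨I, hI : ∀ i, I i ∈ S, rfl⟩
  obtain ⟨j, hjS, hjI⟩ : ∃ j ∈ S, j ∉ Finset.univ.map I :=
    Finset.exists_mem_notMem_of_card_lt_card (by simpa using hS)
  replace hjI : j ∉ Set.range I := by simpa using hjI
  have haI : a ∉ Set.range I := by
    rintro ⟨i, rfl⟩
    exact ha (hI i)
  have hjaI : j ∉ Set.range (Fin.Embedding.snoc I haI) := by
    simp [hjI, ne_of_mem_of_not_mem hjS ha]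
  have hsnoc : differenceProduct R I * (X a - X j) ∈ differenceForms R (insert a S) (k + 1) := by
    rw [← differenceProduct_snoc_snoc I haI hjaI]
    refine differenceProduct_mem_differenceForms (Set.forall_mem_range.1 ?_)
    simp [hjS, hI]
  refine Submodule.mem_sup.2 ⟨_, hsnoc, _,
    X_mul_differenceProduct_mem_squarefreeForms hI hjS hjI, ?_⟩
  rw [LinearMap.mulLeft_apply]
  ring

theorem mem_differenceForms_of_shift_eq {c : R} (hc : c ∈ nonZeroDivisors R) {S : Finset σ} {k : ℕ}
    {f : MvPolynomial σ R} (hf : f ∈ squarefreeForms R S k) (hfc : shift c f = f) :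
    f ∈ differenceForms R S k := by
  induction S using Finset.induction_on generalizing k f with
  | empty =>
    rcases k.eq_zero_or_pos with rfl | hk
    · rwa [differenceForms_zero]
    · rw [eq_zero_of_shift_eq_of_card_lt (by simpa using hk) hc hf hfc]
      exact zero_mem _
  | insert a S ha ih =>
    rcases k with _ | k
    · rwa [differenceForms_zero]
    rcases lt_or_ge (insert a S).card (2 * (k + 1)) with hS | hS
    · rw [eq_zero_of_shift_eq_of_card_lt hS hc hf hfc]
      exact zero_mem _
    rw [Finset.card_insert_of_notMem ha] at hS
    have hg : pderiv a f ∈ differenceForms R S k := by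
      refine ih ?_ (by rw [← pderiv_shift, hfc])
      simpa only [Finset.erase_insert ha] using pderiv_mem_squarefreeForms a hf
    have hh : f - X a * pderiv a f ∈ squarefreeForms R S (k + 1) := by
      simpa only [Finset.erase_insert ha] using sub_X_mul_pderiv_mem_squarefreeForms a hf
    obtain ⟨q, hq, r, hr, hqr⟩ := Submodule.mem_sup.1
      (X_mul_mem_differenceForms_sup_squarefreeForms ha (by lia) hg)
    have hfq : f - q ∈ differenceForms R S (k + 1) := by
      refine ih ?_ (by rw [map_sub, hfc, shift_eq_of_mem_differenceForms c hq])
      have hrem : f - q = (f - X a * pderiv a f) + r := by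
        rw [← hqr]
        ring
      exact hrem ▸ add_mem hh hr
    rw [← sub_add_cancel f q]
    exact add_mem (differenceForms_mono (Finset.subset_insert a S) _ hfq) hq

theorem Lsub_top_eq_shift_invariants_general (S : Finset σ) (k : ℕ) (f : MvPolynomial σ R) :
    List.TFAE [f ∈ differenceForms R S k,
      f ∈ squarefreeForms R S k ∧ ∀ c : R, shift c f = f,
      f ∈ squarefreeForms R S k ∧ ∃ c ∈ nonZeroDivisors R, shift c f = f] := by
  tfae_have 1 → 2 := fun hf ↦
    ⟨differenceForms_le_squarefreeForms S k hf, fun c ↦ shift_eq_of_mem_differenceForms c hf⟩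
  tfae_have 2 → 3 := fun ⟨hf, hfc⟩ ↦ ⟨hf, 1, one_mem _, hfc 1⟩
  tfae_have 3 → 1 := fun ⟨hf, _, hc, hfc⟩ ↦ mem_differenceForms_of_shift_eq hc hf hfc
  tfae_finish

end CommRing

lemma Fspace_eq_squarefreeForms (n k : ℕ) : Fspace n k = squarefreeForms ℂ Finset.univ k := by
  rw [Fspace, squarefreeForms]
  congr 1
  ext p
  simp [eq_comm]

lemma Lsub_self_eq_differenceForms (n k : ℕ) : Lsub n k k = differenceForms ℂ Finset.univ k := by
  have hX : XIform n k k = differenceProduct ℂ := by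
    ext1 I
    simp [XIform, esymmOn, differenceProduct]
  simp [Lsub, differenceForms, hX]

/-- For even `n = 2k`, the highest component `L_k ⊆ F_k` consists exactly of the
square-free `k`-linear forms that depend only on the differences of the variables,
i.e. are invariant under simultaneously adding a constant to all variables. -/
theorem Lsub_top_eq_shift_invariants (n k : ℕ) (hnk : n = 2 * k) :
    (Lsub n k k : Set (MvPolynomial (Fin n) ℂ)) =
      {f | f ∈ Fspace n k ∧
        ∀ c : ℂ, MvPolynomial.aeval (fun i : Fin n => X i + C c) f = f} := by
  rw [Lsub_self_eq_differenceForms, Fspace_eq_squarefreeForms]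
  exact Set.ext fun f ↦ (Lsub_top_eq_shift_invariants_general Finset.univ k f).out 0 1

end
end

section
/- Let λ ⊢ n. The Specht module SP_λ (the ℂ-linear span of all Specht polynomials SP_T of shape λ) equals the subspace of L_λ consisting of all forms depending only on the differences of the variables: SP_λ = {f ∈ L_λ : f(x₁+c, …, x_n+c) = f(x₁,…,x_n) for all c ∈ ℂ}. -/
open scoped Classical

noncomputable section

open MvPolynomial

/-- The Specht polynomial of a bijective filling `T` of the cells of `lam` by `0,…,n-1`:
the product over all pairs of cells in the same column (the first strictly above the
second) of the differences of the corresponding variables — i.e. the product of the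
column Vandermonde determinants. -/
noncomputable def spechtPoly (n : ℕ) (lam : YoungDiagram) (T : lam.cells ≃ Fin n) :
    MvPolynomial (Fin n) ℂ :=
  ∏ p ∈ Finset.univ.filter
      (fun p : lam.cells × lam.cells =>
        (p.1 : ℕ × ℕ).2 = (p.2 : ℕ × ℕ).2 ∧ (p.1 : ℕ × ℕ).1 < (p.2 : ℕ × ℕ).1),
    (X (T p.1) - X (T p.2))

/-- The Specht module: the linear span of all Specht polynomials of shape `lam`. -/
noncomputable def spechtModule (n : ℕ) (lam : YoungDiagram) :
    Submodule ℂ (MvPolynomial (Fin n) ℂ) :=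
  Submodule.span ℂ (Set.range (spechtPoly n lam))

/-- The space `L_λ`: the span of all monomials in `x_0,…,x_{n-1}` whose multiset of
exponents (over all `n` variables, zero exponents included) equals the multiset of
(0-indexed) row indices of the cells of `λ`. -/
noncomputable def Lspace (n : ℕ) (lam : YoungDiagram) : Submodule ℂ (MvPolynomial (Fin n) ℂ) :=
  Submodule.span ℂ
    {p | ∃ d : Fin n →₀ ℕ,
      Multiset.map (⇑d) Finset.univ.val = Multiset.map Prod.fst lam.cells.val ∧
      p = MvPolynomial.monomial d (1 : ℂ)}

/-!
A Specht polynomial is a product of differences of variables, and it is the determinant of a block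
diagonal matrix whose blocks are Vandermonde matrices, so that its monomials lie in `L_λ`.

Conversely, let `f ∈ L_λ` be nonzero and invariant under shifts, so that `∑ₖ ∂ₖ f = 0`. All the
exponents of `f` have the same multiset of entries, hence this relation splits according to the
entry that is raised: for all `u` and `i`, the coefficients of `f` at the exponents `u + eₖ` with
`uₖ = i` sum to zero. Reading exponents as words, these are the equations of a highest weight
vector. By Gottlieb's theorem on inclusion matrices they force the lexicographically leading
exponent of `f` to be a Yamanouchi word of content `λ`. Such a word is the list of the row indices
in a filling `T` of `λ` with decreasing columns, and `SP_T` has the same leading exponent as `f`,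
with leading coefficient `±1`. Subtract a multiple of `SP_T` from `f` and induct.
-/

section Gottlieb

open Finset

variable {α M : Type*} [DecidableEq α] [AddCommMonoid M]

theorem sum_powersetCard_sum_sdiff_insert (S : Finset α) (b : ℕ) (f : Finset α → α → M) :
    ∑ B ∈ S.powersetCard b, ∑ k ∈ S \ B, f (insert k B) k =
      ∑ A ∈ S.powersetCard (b + 1), ∑ k ∈ A, f A k := by
  rw [sum_sigma', sum_sigma']
  refine sum_bij' (fun x _ => ⟨insert x.2 x.1, x.2⟩) (fun x _ => ⟨x.1.erase x.2, x.2⟩)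
    ?_ ?_ ?_ ?_ fun _ _ => rfl
  all_goals
    rintro ⟨B, k⟩ h
    simp only [mem_sigma, mem_powersetCard, mem_sdiff] at h ⊢
  · obtain ⟨⟨hBS, hcard⟩, hkS, hkB⟩ := h
    exact ⟨⟨insert_subset hkS hBS, by rw [card_insert_of_notMem hkB, hcard]⟩,
      mem_insert_self k B⟩
  · obtain ⟨⟨hBS, hcard⟩, hkB⟩ := h
    exact ⟨⟨(erase_subset k B).trans hBS, by rw [card_erase_of_mem hkB, hcard]; rfl⟩,
      hBS hkB, notMem_erase k B⟩
  · rw [erase_insert h.2.2]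
  · rw [insert_erase h.2]

theorem sum_ite_card_erase_inter_eq (A A₀ : Finset α) (j : ℕ) (x : M) :
    ∑ k ∈ A, (if #(A.erase k ∩ A₀) = j then x else 0) =
      (if #(A ∩ A₀) = j then (#A - j) • x else 0) +
        (if #(A ∩ A₀) = j + 1 then (j + 1) • x else 0) := by
  have inside : ∀ k ∈ A ∩ A₀, (#(A.erase k ∩ A₀) = j ↔ #(A ∩ A₀) = j + 1) := fun k hk => by
    rw [erase_inter, ← card_erase_add_one hk, Nat.add_right_cancel_iff]
  have outside : ∀ k ∈ A \ A₀, (#(A.erase k ∩ A₀) = j ↔ #(A ∩ A₀) = j) := fun k hk => by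
    rw [erase_inter, erase_eq_of_notMem fun h => (mem_sdiff.1 hk).2 (mem_inter.1 h).2]
  rw [← sum_inter_add_sum_sdiff A A₀, add_comm]
  congr 1
  · rw [sum_congr rfl fun k hk => if_congr (outside k hk) rfl rfl, sum_const, smul_ite, smul_zero]
    refine ite_congr rfl (fun h => ?_) fun _ => rfl
    rw [← h, ← card_inter_add_card_sdiff A A₀, Nat.add_sub_cancel_left]
  · rw [sum_congr rfl fun k hk => if_congr (inside k hk) rfl rfl, sum_const, smul_ite, smul_zero]
    exact ite_congr rfl (fun h => by rw [h]) fun _ => rfl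

variable {S A₀ : Finset α} {b : ℕ} {g : Finset α → M}

theorem smul_sum_card_inter_add_smul_sum_card_inter_succ
    (hg : ∀ B ∈ S.powersetCard b, ∑ k ∈ S \ B, g (insert k B) = 0) (A₀ : Finset α) (j : ℕ) :
    (b + 1 - j) • ∑ A ∈ S.powersetCard (b + 1) with #(A ∩ A₀) = j, g A +
      (j + 1) • ∑ A ∈ S.powersetCard (b + 1) with #(A ∩ A₀) = j + 1, g A = 0 := by
  have double_count :
      ∑ A ∈ S.powersetCard (b + 1), ∑ k ∈ A, (if #(A.erase k ∩ A₀) = j then g A else 0) = 0 := by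
    rw [← sum_powersetCard_sum_sdiff_insert S b
      (fun A k => if #(A.erase k ∩ A₀) = j then g A else 0)]
    refine sum_eq_zero fun B hB => ?_
    rw [sum_congr rfl fun k hk => by rw [erase_insert (mem_sdiff.1 hk).2]]
    split_ifs
    · exact hg B hB
    · exact sum_const_zero
  rw [← double_count, smul_sum, smul_sum, sum_filter, sum_filter, ← sum_add_distrib]
  refine sum_congr rfl fun A hA => ?_
  rw [sum_ite_card_erase_inter_eq, (mem_powersetCard.1 hA).2]

/- Gottlieb's theorem on the injectivity of inclusion matrices, by induction on `#(A ∩ A₀)`. -/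
theorem eq_zero_of_sum_insert_eq_zero [IsAddTorsionFree M]
    (hg : ∀ B ∈ S.powersetCard b, ∑ k ∈ S \ B, g (insert k B) = 0)
    (hS : #S < 2 * (b + 1)) (hA₀ : A₀ ∈ S.powersetCard (b + 1)) : g A₀ = 0 := by
  obtain ⟨hA₀S, hA₀card⟩ := mem_powersetCard.1 hA₀
  have level_eq_zero : ∀ j, ∑ A ∈ S.powersetCard (b + 1) with #(A ∩ A₀) = j, g A = 0 := by
    intro j
    induction j with
    | zero =>
      refine sum_eq_zero fun A hA => ?_
      obtain ⟨hA, hdisj⟩ := mem_filter.1 hA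
      obtain ⟨hAS, hAcard⟩ := mem_powersetCard.1 hA
      have := card_union_add_card_inter A A₀
      have := card_le_card (union_subset hAS hA₀S)
      omega
    | succ j ih =>
      have recurrence := smul_sum_card_inter_add_smul_sum_card_inter_succ hg A₀ j
      rw [ih, smul_zero, zero_add] at recurrence
      exact (nsmul_eq_zero_iff_right j.succ_ne_zero).1 recurrence
  have top_level : {A ∈ S.powersetCard (b + 1) | #(A ∩ A₀) = b + 1} = {A₀} := by
    ext A
    simp only [mem_filter, mem_singleton]
    constructor
    · rintro ⟨hA, hinter⟩
      have hAcard := (mem_powersetCard.1 hA).2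
      rw [← eq_of_subset_of_card_le (inter_subset_left (s₁ := A) (s₂ := A₀)) (by omega),
        eq_of_subset_of_card_le (inter_subset_right (s₁ := A) (s₂ := A₀)) (by omega)]
    · rintro rfl
      exact ⟨hA₀, by rwa [inter_self]⟩
  rw [← sum_singleton g A₀, ← top_level, level_eq_zero]

end Gottlieb

section Yamanouchi

open Finset Function

variable {σ : Type*}

/-- The word obtained from `w` by writing `i + 1` at the positions in `A` and `i` at the positions
in `S \ A`. -/
def relabel [DecidableEq σ] (w : σ → ℕ) (i : ℕ) (S A : Finset σ) : σ → ℕ :=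
  A.piecewise (fun _ => i + 1) (S.piecewise (fun _ => i) w)

theorem relabel_insert [DecidableEq σ] (w : σ → ℕ) (i : ℕ) (S A : Finset σ) (k : σ) :
    relabel w i S (insert k A) = update (relabel w i S A) k (i + 1) :=
  piecewise_insert ..

theorem relabel_apply_of_notMem [DecidableEq σ] {S A : Finset σ} (hA : A ⊆ S) {k : σ} (hk : k ∉ S)
    (w : σ → ℕ) (i : ℕ) : relabel w i S A k = w k := by
  rw [relabel, piecewise_eq_of_notMem _ _ _ (notMem_mono hA hk), piecewise_eq_of_notMem _ _ _ hk]

variable [Fintype σ] [LinearOrder σ]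

/-- The number of occurrences of the letter `i` in the word `w` from position `r` onwards. -/
def tailCount (w : σ → ℕ) (r : σ) (i : ℕ) : ℕ :=
  #{k | r ≤ k ∧ w k = i}

/-- Yamanouchi words (reverse lattice words) on the letters `0, 1, 2, …`: in every tail of the
word each letter occurs at least as often as every larger one. -/
def IsYamanouchi (w : σ → ℕ) : Prop :=
  ∀ r, Antitone (tailCount w r)

variable {w : σ → ℕ}

theorem tailCount_pos (w : σ → ℕ) (k : σ) : 0 < tailCount w k (w k) :=
  card_pos.2 ⟨k, by simp⟩

theorem tailCount_le_card (w : σ → ℕ) (r : σ) (i : ℕ) : tailCount w r i ≤ #{k | w k = i} :=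
  card_le_card fun k => by simp

theorem tailCount_lt_tailCount {k l : σ} (hkl : k < l) :
    tailCount w l (w k) < tailCount w k (w k) := by
  refine card_lt_card <| (ssubset_iff_of_subset fun x => ?_).2 ⟨k, by simp, by simp [hkl]⟩
  simpa using fun hlx hx => ⟨hkl.le.trans hlx, hx⟩

variable {M : Type*} [AddCommMonoid M] {c : (σ → ℕ) → M}

theorem sum_relabel_insert_eq_zero (hmax : ∀ u, toLex w < toLex u → c u = 0) {i : ℕ}
    (hc : ∀ u : σ → ℕ, ∑ k with u k = i, c (update u k (i + 1)) = 0)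
    {r : σ} {S B : Finset σ} (hrS : ∀ k ∈ S, r ≤ k) (hS : ∀ k, r ≤ k → w k = i → k ∈ S)
    (hB : B ⊆ S) : ∑ k ∈ S \ B, c (relabel w i S (insert k B)) = 0 := by
  simp only [relabel_insert]
  rw [← hc (relabel w i S B)]
  refine sum_subset (fun k hk => ?_) fun k hk hkSB => hmax _ ?_
  · obtain ⟨hkS, hkB⟩ := mem_sdiff.1 hk
    rw [mem_filter_univ]
    simp [relabel, hkS, hkB]
  · rw [mem_filter_univ] at hk
    have hkS : k ∉ S := fun hkS => by
      have hkB : k ∈ B := by simpa [hkS] using hkSB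
      simp [relabel, hkB] at hk
    rw [relabel_apply_of_notMem hB hkS] at hk
    have hkr : k < r := not_le.1 fun hrk => hkS (hS k hrk hk)
    refine ⟨k, fun l hlk => ?_, ?_⟩
    · have hlS : l ∉ S := fun hlS => (hlk.trans hkr).not_ge (hrS l hlS)
      simp [hlk.ne, relabel_apply_of_notMem hB hlS]
    · simp [hk]

/- If the tail from `r` on had more letters `i + 1` than letters `i`, Gottlieb's theorem would apply
to `c` on the words obtained by redistributing these letters among their positions. Its hypotheses
are instances of `hc`: the other terms of `hc` change a letter before `r`, giving words larger
than `w`. -/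
theorem isYamanouchi_of_sum_update_eq_zero [IsAddTorsionFree M]
    (hw : c w ≠ 0) (hmax : ∀ u, toLex w < toLex u → c u = 0)
    (hc : ∀ (i : ℕ) (u : σ → ℕ), ∑ k with u k = i, c (update u k (i + 1)) = 0) :
    IsYamanouchi w := by
  refine fun r => antitone_nat_of_succ_le fun i => ?_
  by_contra! hlt
  set upper : Finset σ := {k | r ≤ k ∧ w k = i + 1} with hupper
  set lower : Finset σ := {k | r ≤ k ∧ w k = i} with hlower
  change #lower < #upper at hlt
  obtain ⟨b, hb⟩ := Nat.exists_eq_succ_of_ne_zero (Nat.ne_zero_of_lt hlt)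
  have relabel_upper : relabel w i (upper ∪ lower) upper = w := by
    ext k
    simp only [relabel, piecewise, hupper, hlower, mem_union, mem_filter_univ]
    grind
  refine hw (relabel_upper ▸ eq_zero_of_sum_insert_eq_zero (S := upper ∪ lower) (b := b)
    (g := fun A => c (relabel w i (upper ∪ lower) A)) (fun B hB => ?_) ?_ ?_)
  · refine sum_relabel_insert_eq_zero (r := r) hmax (hc i) (fun k hk => ?_) (fun k hrk hk => ?_)
      (mem_powersetCard.1 hB).1
    · simp only [hupper, hlower, mem_union, mem_filter_univ] at hk
      exact hk.elim And.left And.left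
    · simp [hlower, hrk, hk]
  · have := card_union_le upper lower
    omega
  · exact mem_powersetCard.2 ⟨subset_union_left, hb⟩

end Yamanouchi

section Filling

open Finset

variable {σ : Type*} [Fintype σ] {μ : YoungDiagram}

/-- The weights of the monomials spanning `L_μ`: the vectors in `ℕ^σ` in which each `i` occurs as
often as there are cells in row `i` of `μ`. -/
def rowWeights (σ : Type*) [Fintype σ] (μ : YoungDiagram) : Set (σ →₀ ℕ) :=
  {d | Multiset.map d univ.val = Multiset.map Prod.fst μ.cells.val}

theorem card_eq_card_of_mem_rowWeights {d : σ →₀ ℕ} (hd : d ∈ rowWeights σ μ) :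
    Fintype.card σ = μ.card := by
  simpa using congrArg Multiset.card hd

theorem card_filter_eq_rowLen_of_mem_rowWeights {d : σ →₀ ℕ} (hd : d ∈ rowWeights σ μ) (i : ℕ) :
    #{k | d k = i} = μ.rowLen i := by
  have hcount := congrArg (Multiset.count i) hd
  rw [Multiset.count_map, Multiset.count_map] at hcount
  simpa only [YoungDiagram.rowLen_eq_card, YoungDiagram.row, card_def, filter_val,
    eq_comm (a := i)] using hcount

theorem mem_rowWeights_of_apply_eq (T : μ.cells ≃ σ) {d : σ →₀ ℕ}
    (hd : ∀ c, d (T c) = (c : ℕ × ℕ).1) : d ∈ rowWeights σ μ := by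
  calc
    Multiset.map d univ.val = Multiset.map d (Multiset.map T univ.val) := by
      rw [← map_univ_equiv T, map_val]; rfl
    _ = Multiset.map Prod.fst (Multiset.map Subtype.val μ.cells.attach.val) := by
      rw [Multiset.map_map, Multiset.map_map]
      exact Multiset.map_congr rfl fun c _ => hd c
    _ = Multiset.map Prod.fst μ.cells.val := by
      rw [attach_val, Multiset.attach_map_val]

variable [LinearOrder σ]

/-- Fillings whose entries decrease down the columns. -/
def IsColumnDecreasing (T : μ.cells ≃ σ) : Prop :=
  ∀ ⦃a b : μ.cells⦄, (a : ℕ × ℕ).2 = (b : ℕ × ℕ).2 → (a : ℕ × ℕ).1 < (b : ℕ × ℕ).1 → T b < T a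

/- Position `k` goes to row `d k`, and the positions of each row are numbered from the right. -/
theorem exists_isColumnDecreasing_of_isYamanouchi {d : σ →₀ ℕ} (hd : d ∈ rowWeights σ μ)
    (hlat : IsYamanouchi d) :
    ∃ T : μ.cells ≃ σ, IsColumnDecreasing T ∧ ∀ c, d (T c) = (c : ℕ × ℕ).1 := by
  have cell_mem (k : σ) : (d k, tailCount d k (d k) - 1) ∈ μ.cells := by
    rw [YoungDiagram.mem_cells, YoungDiagram.mem_iff_lt_rowLen,
      ← card_filter_eq_rowLen_of_mem_rowWeights hd]
    have := tailCount_pos d k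
    have := tailCount_le_card d k (d k)
    omega
  let cell (k : σ) : μ.cells := ⟨_, cell_mem k⟩
  have lt_of_same_column {k l : σ} (hcol : (cell k : ℕ × ℕ).2 = (cell l : ℕ × ℕ).2)
      (hrow : d k ≤ d l) (hne : k ≠ l) : l < k := by
    refine (lt_or_gt_of_ne hne).resolve_left fun hkl => ?_
    have := tailCount_pos d k
    have := tailCount_pos d l
    have : tailCount d l (d l) ≤ tailCount d l (d k) := hlat l hrow
    have : tailCount d l (d k) < tailCount d k (d k) := tailCount_lt_tailCount hkl
    dsimp [cell] at hcol
    omega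
  have cell_injective : Function.Injective cell := fun k l hkl => by
    by_contra hne
    have hrow : d k = d l := congrArg (fun c : μ.cells => (c : ℕ × ℕ).1) hkl
    exact (lt_of_same_column (by rw [hkl]) hrow.le hne).asymm
      (lt_of_same_column (by rw [hkl]) hrow.ge (Ne.symm hne))
  have cell_bijective : Function.Bijective cell :=
    (Fintype.bijective_iff_injective_and_card cell).2
      ⟨cell_injective, by simpa using card_eq_card_of_mem_rowWeights hd⟩
  let T := (Equiv.ofBijective cell cell_bijective).symm
  have cell_T (c : μ.cells) : cell (T c) = c := Equiv.ofBijective_apply_symm_apply ..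
  have row_T (c : μ.cells) : d (T c) = (c : ℕ × ℕ).1 :=
    congrArg (fun c : μ.cells => (c : ℕ × ℕ).1) (cell_T c)
  refine ⟨T, fun c c' hcol hrow => lt_of_same_column ?_ ?_ ?_, row_T⟩
  · rwa [cell_T, cell_T]
  · rw [row_T, row_T]
    exact hrow.le
  · exact fun h => hrow.ne (by rw [T.injective h])

end Filling

section LeadingTerms

variable {σ R : Type*} [CommRing R]

theorem le_of_forall_exists_degree_eq (m : MonomialOrder σ) {V W : Submodule R (MvPolynomial σ R)}
    (hVW : V ≤ W) (hdeg : ∀ f ∈ W, f ≠ 0 →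
      ∃ g ∈ V, m.degree g = m.degree f ∧ IsUnit (m.leadingCoeff g)) : W ≤ V := by
  intro f
  induction hs : m.toSyn (m.degree f) using WellFoundedLT.induction generalizing f with
  | ind s ih =>
  subst hs
  intro hf
  obtain rfl | hf0 := eq_or_ne f 0
  · exact V.zero_mem
  obtain ⟨g, hg, hgf, a, ha⟩ := hdeg f hf hf0
  set r := f - (m.leadingCoeff f * ↑a⁻¹) • g with hr
  suffices r ∈ V by simpa [hr] using V.add_mem this (V.smul_mem (m.leadingCoeff f * ↑a⁻¹) hg)
  obtain hr0 | hr0 := eq_or_ne r 0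
  · exact hr0 ▸ V.zero_mem
  refine ih _ (lt_of_le_of_ne ?_ fun h => ?_) rfl (W.sub_mem hf (W.smul_mem _ (hVW hg)))
  · exact m.degree_sub_le.trans (sup_le le_rfl (m.degree_smul_le.trans_eq (by rw [hgf])))
  · refine m.leadingCoeff_ne_zero_iff.2 hr0 ?_
    have hag : coeff (m.degree f) g = a := by rw [ha, ← hgf]; rfl
    rw [MonomialOrder.leadingCoeff, m.toSyn.injective h, hr, coeff_sub, coeff_smul, hag,
      smul_eq_mul, mul_assoc, Units.inv_mul, mul_one, MonomialOrder.leadingCoeff, sub_self]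

end LeadingTerms

section ShiftInvariants

variable {σ R : Type*} [CommSemiring R]

/-- The polynomials depending only on the differences of the variables, encoded as the polynomials
fixed by all substitutions `x_i ↦ x_i + c` with `c ∈ R`. -/
def shiftInvariants (σ R : Type*) [CommSemiring R] : Subalgebra R (MvPolynomial σ R) :=
  ⨅ c : R, AlgHom.equalizer (aeval fun i => X i + C c) (AlgHom.id R (MvPolynomial σ R))

theorem mem_shiftInvariants {f : MvPolynomial σ R} :
    f ∈ shiftInvariants σ R ↔ ∀ c : R, aeval (fun i => X i + C c) f = f := by
  simp [shiftInvariants, Algebra.mem_iInf, AlgHom.mem_equalizer]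

theorem X_sub_X_mem_shiftInvariants {R : Type*} [CommRing R] (i j : σ) :
    (X i - X j : MvPolynomial σ R) ∈ shiftInvariants σ R :=
  mem_shiftInvariants.2 fun c => by simp

/-- The substitution `x_i ↦ x_i + t`, with values in the polynomials in `t`. -/
def shiftHom (σ R : Type*) [CommSemiring R] :
    MvPolynomial σ R →ₐ[R] Polynomial (MvPolynomial σ R) :=
  aeval fun i => Polynomial.C (X i) + Polynomial.X

theorem shiftHom_X (i : σ) : shiftHom σ R (X i) = Polynomial.C (X i) + Polynomial.X :=
  aeval_X ..

theorem eval_C_shiftHom (f : MvPolynomial σ R) (c : R) :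
    (shiftHom σ R f).eval (C c) = aeval (fun i => X i + C c) f := by
  induction f using MvPolynomial.induction_on with
  | C a => simp [shiftHom, Polynomial.algebraMap_apply]
  | add p q hp hq => simp [hp, hq]
  | mul_X p j hp =>
    rw [map_mul, map_mul, Polynomial.eval_mul, hp, shiftHom_X, aeval_X]
    simp

theorem coeff_zero_shiftHom (f : MvPolynomial σ R) : (shiftHom σ R f).coeff 0 = f := by
  rw [Polynomial.coeff_zero_eq_eval_zero, ← C_0, eval_C_shiftHom]
  simp

theorem coeff_one_shiftHom [Fintype σ] (f : MvPolynomial σ R) :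
    (shiftHom σ R f).coeff 1 = ∑ i, pderiv i f := by
  induction f using MvPolynomial.induction_on with
  | C a => simp [shiftHom, Polynomial.algebraMap_apply]
  | add p q hp hq => simp [hp, hq, Finset.sum_add_distrib]
  | mul_X p j hp =>
    calc
      (shiftHom σ R (p * X j)).coeff 1 = (∑ i, pderiv i p) * X j + p := by
        rw [map_mul, shiftHom_X, mul_add, Polynomial.coeff_add, Polynomial.coeff_mul_C,
          Polynomial.coeff_mul_X, coeff_zero_shiftHom, hp]
      _ = ∑ i, pderiv i (p * X j) := by
        simp only [pderiv_mul, pderiv_X, Finset.sum_add_distrib, Finset.sum_mul]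
        simp [Pi.single_apply]

theorem sum_pderiv_eq_zero_of_mem_shiftInvariants [Fintype σ] {R : Type*} [CommRing R]
    [IsDomain R] [Infinite R] {f : MvPolynomial σ R} (hf : f ∈ shiftInvariants σ R) :
    ∑ i, pderiv i f = 0 := by
  have shiftHom_eq_C : shiftHom σ R f = Polynomial.C f := by
    refine Polynomial.eq_of_infinite_eval_eq _ _
      ((Set.infinite_range_of_injective (C_injective σ R)).mono ?_)
    rintro _ ⟨c, rfl⟩
    simpa [eval_C_shiftHom] using mem_shiftInvariants.1 hf c
  rw [← coeff_one_shiftHom, shiftHom_eq_C, Polynomial.coeff_C_of_ne_zero one_ne_zero]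

end ShiftInvariants

section HighestWeight

open Finset Function

variable {σ R : Type*} [Fintype σ] [CommRing R] [IsDomain R] [CharZero R]

theorem sum_sq_add_single (u : σ →₀ ℕ) (k : σ) :
    ∑ i, (u + Finsupp.single k 1 : σ →₀ ℕ) i ^ 2 = ∑ i, u i ^ 2 + (2 * u k + 1) := by
  have expand (i : σ) : (u + Finsupp.single k 1 : σ →₀ ℕ) i ^ 2 =
      u i ^ 2 + if i = k then 2 * u i + 1 else 0 := by
    rw [Finsupp.add_apply, Finsupp.single_apply, eq_comm (a := k)]
    split_ifs <;> ring
  simp only [expand, sum_add_distrib]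
  simp

theorem apply_eq_of_map_add_single_eq {u : σ →₀ ℕ} {k l : σ}
    (h : Multiset.map (u + Finsupp.single k 1 : σ →₀ ℕ) univ.val =
      Multiset.map (u + Finsupp.single l 1 : σ →₀ ℕ) univ.val) : u k = u l := by
  have sum_sq_eq : ∑ i, (u + Finsupp.single k 1 : σ →₀ ℕ) i ^ 2 =
      ∑ i, (u + Finsupp.single l 1 : σ →₀ ℕ) i ^ 2 := by
    have := congrArg (fun s => (s.map (· ^ 2)).sum) h
    rwa [Multiset.map_map, Multiset.map_map] at this
  rw [sum_sq_add_single, sum_sq_add_single] at sum_sq_eq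
  omega

theorem sum_coeff_add_single_eq_zero {s : Multiset ℕ} {f : MvPolynomial σ R}
    (hs : f ∈ restrictSupport R {d : σ →₀ ℕ | Multiset.map d univ.val = s})
    (hf : ∑ k, pderiv k f = 0) (i : ℕ) (u : σ →₀ ℕ) :
    ∑ k with u k = i, coeff (u + Finsupp.single k 1) f = 0 := by
  have weight_of_coeff_ne_zero {d : σ →₀ ℕ} (hd : coeff d f ≠ 0) :
      Multiset.map d univ.val = s := hs (mem_support_iff.2 hd)
  by_contra hsum
  obtain ⟨k, hk, hcoeff⟩ := exists_ne_zero_of_sum_ne_zero hsum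
  rw [mem_filter_univ] at hk
  have coeff_eq_zero (l : σ) (hl : u l ≠ i) : coeff (u + Finsupp.single l 1) f = 0 := by
    by_contra hne
    exact hl <| hk ▸ apply_eq_of_map_add_single_eq
      ((weight_of_coeff_ne_zero hne).trans (weight_of_coeff_ne_zero hcoeff).symm)
  refine mul_ne_zero hsum (Nat.cast_add_one_ne_zero i) ?_
  calc
    (∑ k with u k = i, coeff (u + Finsupp.single k 1) f) * (i + 1 : R) =
        ∑ k, coeff (u + Finsupp.single k 1) f * (u k + 1) := by
      rw [sum_filter, sum_mul]
      refine sum_congr rfl fun l _ => ?_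
      split_ifs with hl
      · rw [hl]
      · rw [coeff_eq_zero l hl, zero_mul, zero_mul]
    _ = coeff u (∑ k, pderiv k f) := by simp only [coeff_sum, coeff_pderiv]
    _ = 0 := by rw [hf, coeff_zero]

theorem isYamanouchi_lex_degree [LinearOrder σ] {s : Multiset ℕ} {f : MvPolynomial σ R}
    (hs : f ∈ restrictSupport R {d : σ →₀ ℕ | Multiset.map d univ.val = s})
    (hf : ∑ k, pderiv k f = 0) (hf0 : f ≠ 0) : IsYamanouchi (MonomialOrder.lex.degree f) := by
  refine isYamanouchi_of_sum_update_eq_zero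
    (c := fun u => coeff (Finsupp.equivFunOnFinite.symm u) f) ?_ (fun u hu => ?_) fun i u => ?_
  · rw [Finsupp.equivFunOnFinite_symm_coe]
    exact MonomialOrder.lex.leadingCoeff_ne_zero_iff.2 hf0
  · refine MonomialOrder.coeff_eq_zero_of_lt (m := MonomialOrder.lex)
      (MonomialOrder.lex_lt_iff.2 ?_)
    exact hu
  · rw [← sum_coeff_add_single_eq_zero hs hf i (Finsupp.equivFunOnFinite.symm u)]
    refine sum_congr rfl fun k hk => congrArg (coeff · f) ?_
    obtain rfl := (mem_filter_univ _).1 hk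
    ext l
    obtain rfl | hl := eq_or_ne l k <;> simp [*]

end HighestWeight

section SpechtPolynomial

open Finset

variable {μ : YoungDiagram}

/-- The pairs of distinct cells in the same column of `μ`, the upper cell first. -/
def columnPairs (μ : YoungDiagram) : Finset (μ.cells × μ.cells) :=
  {p | (p.1 : ℕ × ℕ).2 = (p.2 : ℕ × ℕ).2 ∧ (p.1 : ℕ × ℕ).1 < (p.2 : ℕ × ℕ).1}

theorem mem_columnPairs {p : μ.cells × μ.cells} : p ∈ columnPairs μ ↔
    (p.1 : ℕ × ℕ).2 = (p.2 : ℕ × ℕ).2 ∧ (p.1 : ℕ × ℕ).1 < (p.2 : ℕ × ℕ).1 :=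
  mem_filter_univ p

/-- The cells of the column `a` of `μ`, numbered from the top. -/
def columnEquiv (μ : YoungDiagram) (a : ℕ) :
    Fin (μ.colLen a) ≃ {c : μ.cells // (c : ℕ × ℕ).2 = a} where
  toFun i := ⟨⟨(i, a), YoungDiagram.mem_iff_lt_colLen.2 i.2⟩, rfl⟩
  invFun c := ⟨(c : ℕ × ℕ).1, by
    obtain ⟨⟨_, hc⟩, rfl⟩ := c
    exact YoungDiagram.mem_iff_lt_colLen.1 hc⟩
  left_inv _ := rfl
  right_inv := by
    rintro ⟨_, rfl⟩
    rfl

section Vandermonde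

variable {A : Type*} [CommRing A]

/-- The matrix, with rows and columns indexed by the cells of `μ`, that is block diagonal with one
block for each column of `μ`, namely the Vandermonde matrix of the values of `v` in that column. -/
def columnVandermonde (v : μ.cells → A) : Matrix μ.cells μ.cells A :=
  Matrix.of fun c c' => if (c : ℕ × ℕ).2 = (c' : ℕ × ℕ).2 then v c ^ (c' : ℕ × ℕ).1 else 0

theorem det_toSquareBlock_columnVandermonde (v : μ.cells → A) (a : ℕ) :
    ((columnVandermonde v).toSquareBlock (fun c => (c : ℕ × ℕ).2) a).det =
      ∏ p ∈ columnPairs μ with (p.1 : ℕ × ℕ).2 = a, (v p.2 - v p.1) := by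
  set e := columnEquiv μ a
  have vandermonde_block :
      ((columnVandermonde v).toSquareBlock (fun c => (c : ℕ × ℕ).2) a).submatrix e e =
        Matrix.vandermonde fun i => v (e i) := by
    ext i j
    simp [Matrix.toSquareBlock, Matrix.toSquareBlockProp, columnVandermonde,
      Matrix.vandermonde_apply, e, columnEquiv]
  rw [← Matrix.det_submatrix_equiv_self e, vandermonde_block, Matrix.det_vandermonde, prod_sigma']
  refine prod_bij' (fun x _ => (↑(e x.1), ↑(e x.2)))
    (fun p hp => ⟨e.symm ⟨p.1, (mem_filter.1 hp).2⟩, e.symm ⟨p.2, ?_⟩⟩)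
    (fun x hx => ?_) (fun p hp => ?_) (fun _ _ => by simp) (fun _ _ => by simp) fun _ _ => rfl
  · obtain ⟨hp, hcol⟩ := mem_filter.1 hp
    rw [← (mem_columnPairs.1 hp).1, hcol]
  · simpa [mem_columnPairs, e, columnEquiv] using hx
  · simpa [e, columnEquiv] using (mem_columnPairs.1 (mem_filter.1 hp).1).2

theorem det_columnVandermonde (v : μ.cells → A) :
    (columnVandermonde v).det = ∏ p ∈ columnPairs μ, (v p.2 - v p.1) := by
  have block_triangular :
      (columnVandermonde v).BlockTriangular fun c => (c : ℕ × ℕ).2 := fun c c' h => by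
    rw [columnVandermonde, Matrix.of_apply, if_neg h.ne']
  rw [block_triangular.det,
    ← prod_fiberwise_of_maps_to (t := univ.image fun c : μ.cells => (c : ℕ × ℕ).2)
      (g := fun p : μ.cells × μ.cells => (p.1 : ℕ × ℕ).2) fun _ _ =>
        mem_image_of_mem _ (mem_univ _)]
  simp only [det_toSquareBlock_columnVandermonde]

end Vandermonde

variable {σ R : Type*} [CommRing R]

/-- The Specht polynomial of a filling of the cells of `μ` by the elements of `σ`; for `σ = Fin n`
and `R = ℂ` this is `spechtPoly`. -/
def spechtPolynomial (R : Type*) [CommRing R] (T : μ.cells ≃ σ) : MvPolynomial σ R :=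
  ∏ p ∈ columnPairs μ, (X (T p.1) - X (T p.2))

theorem det_columnVandermonde_neg_X (T : μ.cells ≃ σ) :
    (columnVandermonde fun c => -X (R := R) (T c)).det = spechtPolynomial R T := by
  rw [det_columnVandermonde, spechtPolynomial]
  exact prod_congr rfl fun p _ => neg_sub_neg _ _

theorem spechtPolynomial_mem_shiftInvariants (T : μ.cells ≃ σ) :
    spechtPolynomial R T ∈ shiftInvariants σ R :=
  Subalgebra.prod_mem _ fun _ _ => X_sub_X_mem_shiftInvariants _ _

variable [Fintype σ]

theorem prod_neg_X_pow_mem_restrictSupport (T : μ.cells ≃ σ) :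
    ∏ c, (-X (R := R) (T c)) ^ (c : ℕ × ℕ).1 ∈ restrictSupport R (rowWeights σ μ) := by
  set d : σ →₀ ℕ := Finsupp.equivFunOnFinite.symm fun k => (T.symm k : ℕ × ℕ).1
  have d_apply (c : μ.cells) : d (T c) = (c : ℕ × ℕ).1 := by simp [d]
  have prod_eq : ∏ c, (-X (R := R) (T c)) ^ (c : ℕ × ℕ).1 =
      (∏ c : μ.cells, (-1 : R) ^ (c : ℕ × ℕ).1) • monomial d 1 := by
    rw [monomial_eq, Finsupp.prod_fintype _ _ fun _ => pow_zero _, ← T.prod_comp, smul_eq_C_mul,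
      map_prod, C_1, one_mul, ← prod_mul_distrib]
    exact prod_congr rfl fun c _ => by rw [d_apply, neg_pow, C_pow, C_neg, C_1]
  rw [prod_eq]
  exact Submodule.smul_mem _ _
    ((monomial_mem_restrictSupport R).2 (.inl (mem_rowWeights_of_apply_eq T d_apply)))

theorem spechtPolynomial_mem_restrictSupport (T : μ.cells ≃ σ) :
    spechtPolynomial R T ∈ restrictSupport R (rowWeights σ μ) := by
  rw [← det_columnVandermonde_neg_X, Matrix.det_apply]
  refine Submodule.sum_mem _ fun π _ => ?_
  rw [Units.smul_def]
  refine zsmul_mem ?_ _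
  simp only [columnVandermonde, Matrix.of_apply]
  by_cases hπ : ∀ c : μ.cells, (π c : ℕ × ℕ).2 = (c : ℕ × ℕ).2
  · simpa only [hπ, if_true, Equiv.trans_apply] using prod_neg_X_pow_mem_restrictSupport (π.trans T)
  · obtain ⟨c, hc⟩ := not_forall.1 hπ
    rw [prod_eq_zero (mem_univ c) (if_neg hc)]
    exact Submodule.zero_mem _

end SpechtPolynomial

section LeadingExponent

open Finset
open scoped MonomialOrder

variable {σ R : Type*} [LinearOrder σ] [WellFoundedGT σ] [CommRing R]

theorem lex_degree_X_lt_lex_degree_X [Nontrivial R] {a b : σ} (hba : b < a) :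
    MonomialOrder.lex.degree (X a : MvPolynomial σ R) ≺[MonomialOrder.lex]
      MonomialOrder.lex.degree (X b : MvPolynomial σ R) := by
  rw [MonomialOrder.degree_X, MonomialOrder.degree_X, MonomialOrder.lex_lt_iff]
  refine ⟨b, fun j hj => ?_, ?_⟩
  · simp [hj.ne, (hj.trans hba).ne]
  · simp [hba.ne]

theorem lex_degree_X_sub_X [Nontrivial R] {a b : σ} (hba : b < a) :
    MonomialOrder.lex.degree (X a - X b : MvPolynomial σ R) = Finsupp.single b 1 := by
  rw [← neg_sub, MonomialOrder.degree_neg,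
    MonomialOrder.degree_sub_of_lt (lex_degree_X_lt_lex_degree_X hba), MonomialOrder.degree_X]

theorem lex_leadingCoeff_X_sub_X {a b : σ} (hba : b < a) :
    MonomialOrder.lex.leadingCoeff (X a - X b : MvPolynomial σ R) = -1 := by
  nontriviality R
  rw [← neg_sub, MonomialOrder.leadingCoeff_neg,
    MonomialOrder.leadingCoeff_sub_of_lt (lex_degree_X_lt_lex_degree_X hba),
    MonomialOrder.leadingCoeff_X]

variable {μ : YoungDiagram} {T : μ.cells ≃ σ}

theorem card_filter_columnPairs_snd_eq (c : μ.cells) :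
    #{p ∈ columnPairs μ | p.2 = c} = (c : ℕ × ℕ).1 := by
  rw [← card_range (c : ℕ × ℕ).1]
  refine card_bij' (fun p _ => (p.1 : ℕ × ℕ).1)
    (fun i hi => (⟨(i, (c : ℕ × ℕ).2), μ.up_left_mem (mem_range.1 hi).le le_rfl c.2⟩, c))
    ?_ ?_ ?_ fun _ _ => rfl
  · rintro p hp
    obtain ⟨hpair, rfl⟩ := mem_filter.1 hp
    exact mem_range.2 (mem_columnPairs.1 hpair).2
  · intro i hi
    exact mem_filter.2 ⟨mem_columnPairs.2 ⟨rfl, mem_range.1 hi⟩, rfl⟩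
  · rintro p hp
    obtain ⟨hpair, rfl⟩ := mem_filter.1 hp
    simp [← (mem_columnPairs.1 hpair).1]

theorem isUnit_lex_leadingCoeff_X_sub_X (hT : IsColumnDecreasing T) {p : μ.cells × μ.cells}
    (hp : p ∈ columnPairs μ) :
    IsUnit (MonomialOrder.lex.leadingCoeff (X (T p.1) - X (T p.2) : MvPolynomial σ R)) := by
  rw [lex_leadingCoeff_X_sub_X (hT (mem_columnPairs.1 hp).1 (mem_columnPairs.1 hp).2)]
  exact isUnit_one.neg

theorem lex_degree_spechtPolynomial_apply [Nontrivial R] (hT : IsColumnDecreasing T)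
    (c : μ.cells) :
    MonomialOrder.lex.degree (spechtPolynomial R T) (T c) = (c : ℕ × ℕ).1 := by
  calc
    MonomialOrder.lex.degree (spechtPolynomial R T) (T c) =
        ∑ p ∈ columnPairs μ, Finsupp.single (T p.2) 1 (T c) := by
      rw [spechtPolynomial, MonomialOrder.degree_prod_of_regular fun p hp =>
        (isUnit_lex_leadingCoeff_X_sub_X hT hp).isRegular, Finsupp.finsetSum_apply]
      refine sum_congr rfl fun p hp => ?_
      rw [lex_degree_X_sub_X (hT (mem_columnPairs.1 hp).1 (mem_columnPairs.1 hp).2)]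
    _ = #{p ∈ columnPairs μ | p.2 = c} := by
      simp [Finsupp.single_apply]
    _ = (c : ℕ × ℕ).1 := card_filter_columnPairs_snd_eq c

theorem isUnit_lex_leadingCoeff_spechtPolynomial (hT : IsColumnDecreasing T) :
    IsUnit (MonomialOrder.lex.leadingCoeff (spechtPolynomial R T)) := by
  rw [spechtPolynomial, MonomialOrder.leadingCoeff_prod_of_regular fun p hp =>
    (isUnit_lex_leadingCoeff_X_sub_X hT hp).isRegular]
  exact IsUnit.prod_iff.2 fun p hp => isUnit_lex_leadingCoeff_X_sub_X hT hp

end LeadingExponent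

section SpechtModule

variable {σ R : Type*} [Fintype σ] {μ : YoungDiagram} [CommRing R]

/-- The Specht module of shape `μ`, in the variables `σ` and with coefficients in `R`; for
`σ = Fin n` and `R = ℂ` this is `spechtModule`. -/
def spechtSubmodule (σ R : Type*) [CommRing R] (μ : YoungDiagram) :
    Submodule R (MvPolynomial σ R) :=
  Submodule.span R (Set.range fun T : μ.cells ≃ σ => spechtPolynomial R T)

theorem spechtSubmodule_le_inf :
    spechtSubmodule σ R μ ≤
      restrictSupport R (rowWeights σ μ) ⊓ (shiftInvariants σ R).toSubmodule := by
  refine Submodule.span_le.2 ?_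
  rintro _ ⟨T, rfl⟩
  exact ⟨spechtPolynomial_mem_restrictSupport T, spechtPolynomial_mem_shiftInvariants T⟩

variable [IsDomain R] [CharZero R]

theorem exists_spechtPolynomial_lex_degree_eq [LinearOrder σ] {f : MvPolynomial σ R}
    (hweight : f ∈ restrictSupport R (rowWeights σ μ)) (hshift : f ∈ shiftInvariants σ R)
    (hf : f ≠ 0) :
    ∃ T : μ.cells ≃ σ,
      MonomialOrder.lex.degree (spechtPolynomial R T) = MonomialOrder.lex.degree f ∧
        IsUnit (MonomialOrder.lex.leadingCoeff (spechtPolynomial R T)) := by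
  have degree_mem : MonomialOrder.lex.degree f ∈ rowWeights σ μ :=
    hweight (MonomialOrder.lex.degree_mem_support hf)
  obtain ⟨T, hT, hrow⟩ := exists_isColumnDecreasing_of_isYamanouchi degree_mem
    (isYamanouchi_lex_degree hweight (sum_pderiv_eq_zero_of_mem_shiftInvariants hshift) hf)
  refine ⟨T, ?_, isUnit_lex_leadingCoeff_spechtPolynomial hT⟩
  ext k
  obtain ⟨c, rfl⟩ := T.surjective k
  rw [hrow, lex_degree_spechtPolynomial_apply hT]

theorem spechtModule_eq_shift_invariants_general :
    spechtSubmodule σ R μ =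
      restrictSupport R (rowWeights σ μ) ⊓ (shiftInvariants σ R).toSubmodule := by
  let : LinearOrder σ := LinearOrder.lift' (Fintype.equivFin σ) (Fintype.equivFin σ).injective
  refine spechtSubmodule_le_inf.antisymm <| le_of_forall_exists_degree_eq MonomialOrder.lex
    spechtSubmodule_le_inf fun f hf hf0 => ?_
  obtain ⟨T, hdegree, hunit⟩ := exists_spechtPolynomial_lex_degree_eq hf.1 hf.2 hf0
  exact ⟨_, Submodule.subset_span ⟨T, rfl⟩, hdegree, hunit⟩

end SpechtModule

theorem Lspace_eq_restrictSupport (n : ℕ) (lam : YoungDiagram) :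
    Lspace n lam = restrictSupport ℂ (rowWeights (Fin n) lam) := by
  rw [restrictSupport_eq_span, Lspace]
  congr 1
  ext p
  simp [rowWeights, eq_comm]

/-- The Specht module `SP_λ` equals the subspace of `L_λ` of all forms depending only on
the differences of the variables (i.e. invariant under simultaneously adding a constant
to all variables). -/
theorem spechtModule_eq_shift_invariants (n : ℕ) (lam : YoungDiagram) (hlam : lam.card = n) :
    (spechtModule n lam : Set (MvPolynomial (Fin n) ℂ)) =
      {f | f ∈ Lspace n lam ∧
        ∀ c : ℂ, MvPolynomial.aeval (fun i : Fin n => X i + C c) f = f} := by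
  ext f
  change f ∈ spechtSubmodule (Fin n) ℂ lam ↔ _
  rw [spechtModule_eq_shift_invariants_general, Lspace_eq_restrictSupport, Set.mem_ofPred_eq,
    ← mem_shiftInvariants]
  rfl

end
end
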